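/- arXiv:1309.5701 — 3 statements merged into one kernel-verified Lean document; each statement's English description precedes it below -/
import Mathlib

section
/- Let G ∈ ℝ^{r×r} with rank(G) = r, let K ∈ ℝ^{r×ℓ} be a nonnegative matrix whose columns k_1, …, k_ℓ satisfy ‖k_i‖_1 = 1, and let B = GK. For the columns g_j of G and b_i of B, let S = {±g_1, …, ±g_r, ±b_1, …, ±b_ℓ}. Then L* = (GGᵀ)⁻¹ is an optimal solution of the origin-centered MVEE problem Q(S), and the set of active points of Q(S) with respect to L* is exactly {±g_1, …, ±g_r}; moreover, b_iᵀ L* b_i = 1 holds if and only if k_i has exactly one nonzero element, in which case b_i coincides with one of the vectors g_1, …, g_r. -/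
open Matrix

noncomputable def euclNorm {n : ℕ} (v : Fin n → ℝ) : ℝ := Real.sqrt (∑ i, v i ^ 2)

noncomputable def oneNorm {n : ℕ} (v : Fin n → ℝ) : ℝ := ∑ i, |v i|

noncomputable def specNorm {d m : ℕ} (M : Matrix (Fin d) (Fin m) ℝ) : ℝ :=
  ‖LinearMap.toContinuousLinearMap (Matrix.toEuclideanLin M)‖

noncomputable def sigmaMin {d r : ℕ} (M : Matrix (Fin d) (Fin r) ℝ) : ℝ :=
  sInf ((fun x => euclNorm (M *ᵥ x)) '' {x : Fin r → ℝ | euclNorm x = 1})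


lemma simplex_aux {n : ℕ} (k : Fin n → ℝ) (h0 : ∀ a, 0 ≤ k a) (h1 : ∑ a, k a = 1) :
    (∑ a, k a * k a ≤ 1) ∧ ((∑ a, k a * k a = 1) ↔ ∃! a, k a ≠ 0) ∧
    ((∑ a, k a * k a = 1) → ∃ a, k = Pi.single a 1) := by
  have hle : ∀ a, k a ≤ 1 := fun a => by
    rw [← h1]; exact Finset.single_le_sum (fun b _ => h0 b) (Finset.mem_univ a)
  have hle2 : ∀ a ∈ Finset.univ, k a * k a ≤ k a := fun a _ => by nlinarith [h0 a, hle a]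
  have hsingle : (∃! a, k a ≠ 0) → ∃ a, k = Pi.single a 1 := by
    rintro ⟨a, -, hu⟩
    have hz : ∀ b, b ≠ a → k b = 0 := fun b hb => by
      by_contra h; exact hb (hu b h)
    refine ⟨a, ?_⟩
    have : k a = 1 := by
      rw [← h1]; symm
      exact Finset.sum_eq_single a (fun b _ hb => hz b hb) (by simp)
    funext b
    by_cases hb : b = a
    · subst hb; simp [this]
    · simp [hb, hz b hb]
  have hfw : (∑ a, k a * k a = 1) → ∃! a, k a ≠ 0 := by
    intro h
    have he := (Finset.sum_eq_sum_iff_of_le hle2).1 (h.trans h1.symm)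
    obtain ⟨a, ha⟩ : ∃ a, k a ≠ 0 := by
      by_contra! hc; simp [hc] at h1
    have hone : ∀ b, k b ≠ 0 → k b = 1 := fun b hb =>
      mul_left_cancel₀ hb (by simpa using he b (Finset.mem_univ b))
    refine ⟨a, ha, fun b hb => ?_⟩
    by_contra hne
    have : k a + k b ≤ ∑ c, k c := by
      rw [← Finset.sum_pair (Ne.symm hne)]
      exact Finset.sum_le_sum_of_subset_of_nonneg (Finset.subset_univ _) (fun c _ _ => h0 c)
    rw [hone a ha, hone b hb, h1] at this
    norm_num at this
  refine ⟨h1 ▸ Finset.sum_le_sum hle2, ⟨hfw, ?_⟩, fun h => hsingle (hfw h)⟩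
  intro h
  obtain ⟨a, rfl⟩ := hsingle h
  simp [Pi.single_apply]

lemma det_le_one_aux {n : ℕ} (M : Matrix (Fin n) (Fin n) ℝ) (hM : M.PosDef)
    (hd : ∀ j, M j j ≤ 1) : M.det ≤ 1 := by
  have hH := hM.isHermitian
  have ht : ∑ i, hH.eigenvalues i ≤ n := by
    have := hH.trace_eq_sum_eigenvalues
    simp only [RCLike.ofReal_real_eq_id, id_eq] at this
    rw [← this]
    calc M.trace = ∑ j, M j j := rfl
      _ ≤ ∑ j : Fin n, (1:ℝ) := Finset.sum_le_sum (fun j _ => hd j)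
      _ = n := by simp
  have hdet := hH.det_eq_prod_eigenvalues
  simp only [RCLike.ofReal_real_eq_id, id_eq] at hdet
  rw [hdet]
  calc ∏ i, hH.eigenvalues i ≤ ∏ i, Real.exp (hH.eigenvalues i - 1) :=
        Finset.prod_le_prod (fun i _ => (hM.eigenvalues_pos i).le)
          (fun i _ => by linarith [Real.add_one_le_exp (hH.eigenvalues i - 1)])
    _ = Real.exp (∑ i, (hH.eigenvalues i - 1)) := (Real.exp_sum _ _).symm
    _ ≤ 1 := by
      rw [Real.exp_le_one_iff, Finset.sum_sub_distrib]
      simpa using ht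

/-- Proposition 1 of the paper — the active points of `Q(S)` with respect
to `L* = (G Gᵀ)⁻¹` are exactly `{±g_1, …, ±g_r}`. -/
theorem stmt2 (r ℓ : ℕ) (G : Matrix (Fin r) (Fin r) ℝ) (hG : G.rank = r)
    (K : Matrix (Fin r) (Fin ℓ) ℝ) (hKpos : ∀ a i, 0 ≤ K a i)
    (hK1 : ∀ i : Fin ℓ, oneNorm (fun a => K a i) = 1)
    (B : Matrix (Fin r) (Fin ℓ) ℝ) (hB : B = G * K)
    (S : Set (Fin r → ℝ))
    (hS : S = {x | (∃ j : Fin r, x = (fun i => G i j) ∨ x = -(fun i => G i j)) ∨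
                   (∃ i : Fin ℓ, x = (fun a => B a i) ∨ x = -(fun a => B a i))})
    (Lstar : Matrix (Fin r) (Fin r) ℝ) (hLstar : Lstar = (G * Gᵀ)⁻¹) :
    Lstar.PosDef ∧
    (∀ p ∈ S, p ⬝ᵥ (Lstar *ᵥ p) ≤ 1) ∧
    (∀ L : Matrix (Fin r) (Fin r) ℝ, L.PosDef →
      (∀ p ∈ S, p ⬝ᵥ (L *ᵥ p) ≤ 1) → L.det ≤ Lstar.det) ∧
    ({p ∈ S | p ⬝ᵥ (Lstar *ᵥ p) = 1} =
      {x | ∃ j : Fin r, x = (fun i => G i j) ∨ x = -(fun i => G i j)}) ∧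
    (∀ i : Fin ℓ,
      ((fun a => B a i) ⬝ᵥ (Lstar *ᵥ fun a => B a i) = 1 ↔ (∃! a : Fin r, K a i ≠ 0)) ∧
      ((fun a => B a i) ⬝ᵥ (Lstar *ᵥ fun a => B a i) = 1 →
        ∃ j : Fin r, (fun a => B a i) = fun a => G a j)) := by
  have hdet : IsUnit G.det := by
    rw [← Matrix.isUnit_iff_isUnit_det]
    have hG2 : G.rank = Fintype.card (Fin r) := by simpa using hG
    rw [← Matrix.linearIndependent_cols_iff_isUnit]
    rw [linearIndependent_iff_card_eq_finrank_span, ← hG2, Matrix.rank_eq_finrank_span_cols]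
    rfl
  have hdetT : IsUnit (Gᵀ).det := by rwa [Matrix.det_transpose]
  have hGU : IsUnit G := (Matrix.isUnit_iff_isUnit_det _).2 hdet
  have hL : Gᵀ * Lstar * G = 1 := by
    rw [hLstar, Matrix.mul_inv_rev, ← Matrix.mul_assoc, Matrix.mul_nonsing_inv _ hdetT,
      Matrix.one_mul, Matrix.nonsing_inv_mul _ hdet]
  have hconj : ∀ (L : Matrix (Fin r) (Fin r) ℝ) (x : Fin r → ℝ),
      (G *ᵥ x) ⬝ᵥ (L *ᵥ (G *ᵥ x)) = x ⬝ᵥ ((Gᵀ * L * G) *ᵥ x) := by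
    intro L x
    rw [← Matrix.mulVec_mulVec, ← Matrix.mulVec_mulVec, Matrix.dotProduct_mulVec x,
      Matrix.vecMul_transpose]
  have hq : ∀ x, (G *ᵥ x) ⬝ᵥ (Lstar *ᵥ (G *ᵥ x)) = ∑ a, x a * x a := by
    intro x
    rw [hconj, hL, Matrix.one_mulVec]; rfl
  have hneg : ∀ (L : Matrix (Fin r) (Fin r) ℝ) (x : Fin r → ℝ),
      (-x) ⬝ᵥ (L *ᵥ (-x)) = x ⬝ᵥ (L *ᵥ x) := by
    intro L x; simp [Matrix.mulVec_neg]
  have hg : ∀ j, (fun i => G i j) = G *ᵥ Pi.single j 1 := by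
    intro j; simp; rfl
  have hb : ∀ i, (fun a => B a i) = G *ᵥ (fun a => K a i) := by
    intro i; rw [hB]; rfl
  have hK : ∀ i, _ := fun i => simplex_aux (fun a => K a i) (fun a => hKpos a i) (by
    have := hK1 i
    simpa [oneNorm, abs_of_nonneg (hKpos _ i)] using this)
  have hgq : ∀ j, (fun i => G i j) ⬝ᵥ (Lstar *ᵥ fun i => G i j) = 1 := by
    intro j; rw [hg, hq]; simp [Pi.single_apply]
  have hbq : ∀ i, (fun a => B a i) ⬝ᵥ (Lstar *ᵥ fun a => B a i) = ∑ a, K a i * K a i := by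
    intro i; rw [hb, hq]
  have hbj : ∀ i, (fun a => B a i) ⬝ᵥ (Lstar *ᵥ fun a => B a i) = 1 →
      ∃ j : Fin r, (fun a => B a i) = fun a => G a j := by
    intro i h
    rw [hbq] at h
    obtain ⟨j, hj⟩ := (hK i).2.2 h
    exact ⟨j, by rw [hb, hj, hg]⟩
  refine ⟨?_, ?_, ?_, ?_, fun i => ⟨?_, hbj i⟩⟩
  · rw [hLstar]
    apply Matrix.PosDef.inv
    have := Matrix.PosDef.mul_conjTranspose_self G
      (Matrix.vecMul_injective_of_isUnit hGU)
    simpa using this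
  · intro p hp
    rw [hS] at hp
    rcases hp with ⟨j, rfl | rfl⟩ | ⟨i, rfl | rfl⟩
    · exact (hgq j).le
    · rw [hneg]; exact (hgq j).le
    · rw [hbq]; exact (hK i).1
    · rw [hneg, hbq]; exact (hK i).1
  · intro L hLp hLf
    have hM : (Gᵀ * L * G).PosDef := by
      have := hLp.conjTranspose_mul_mul_same (B := G) (Matrix.mulVec_injective_of_isUnit hGU)
      simpa using this
    have h1 := det_le_one_aux _ hM (fun j => by
      have := hLf (fun i => G i j) (by rw [hS]; exact Or.inl ⟨j, Or.inl rfl⟩)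
      rw [hg, hconj] at this
      simpa using this)
    have h2 := congrArg Matrix.det hL
    simp only [Matrix.det_mul, Matrix.det_transpose, Matrix.det_one] at h1 h2
    have hp : 0 < G.det * G.det := mul_self_pos.2 hdet.ne_zero
    refine le_of_mul_le_mul_left ?_ hp
    linarith
  · ext p
    simp only [Set.mem_setOf_eq, hS]
    constructor
    · rintro ⟨h | ⟨i, rfl | rfl⟩, hp⟩
      · exact h
      · obtain ⟨j, hj⟩ := hbj i hp
        exact ⟨j, Or.inl hj⟩
      · rw [hneg] at hp
        obtain ⟨j, hj⟩ := hbj i hp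
        exact ⟨j, Or.inr (by rw [hj])⟩
    · rintro ⟨j, rfl | rfl⟩
      · exact ⟨Or.inl ⟨j, Or.inl rfl⟩, hgq j⟩
      · exact ⟨Or.inl ⟨j, Or.inr rfl⟩, by rw [hneg]; exact hgq j⟩
  · rw [hbq]; exact (hK i).2.1
end

section
/- Let G ∈ ℝ^{r×r} with rank(G) = r, let K ∈ ℝ^{r×ℓ} be a real matrix (not necessarily nonnegative) whose columns k_1, …, k_ℓ satisfy ‖k_i‖_2 < 1, and let B = GK. For the columns g_j of G and b_i of B, let S = {±g_1, …, ±g_r, ±b_1, …, ±b_ℓ}. Then L* = (GGᵀ)⁻¹ is an optimal solution of the origin-centered MVEE problem Q(S), b_iᵀ L* b_i < 1 for every i = 1, …, ℓ, and the set of active points of Q(S) with respect to L* is exactly {±g_1, …, ±g_r}. -/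
open Matrix

theorem det_le_one_of_diag {r : ℕ} (M : Matrix (Fin r) (Fin r) ℝ) (hM : M.PosDef)
    (hd : ∀ j, M j j ≤ 1) : M.det ≤ 1 := by
  have h1 := hM.isHermitian.det_eq_prod_eigenvalues
  have h2 := hM.isHermitian.trace_eq_sum_eigenvalues
  simp only [RCLike.ofReal_real_eq_id, id_eq] at h1 h2
  have h3 : M.trace ≤ r := by
    calc M.trace = ∑ j, M j j := rfl
      _ ≤ ∑ j : Fin r, (1 : ℝ) := Finset.sum_le_sum fun j _ => hd j
      _ = r := by simp
  rw [h1]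
  calc ∏ i, hM.isHermitian.eigenvalues i
      ≤ ∏ i, Real.exp (hM.isHermitian.eigenvalues i - 1) := by
        apply Finset.prod_le_prod
        · intro i _
          exact (hM.eigenvalues_pos i).le
        · intro i _
          have := Real.add_one_le_exp (hM.isHermitian.eigenvalues i - 1)
          linarith
    _ = Real.exp (∑ i, (hM.isHermitian.eigenvalues i - 1)) := (Real.exp_sum _ _).symm
    _ ≤ 1 := by
        rw [Real.exp_le_one_iff, Finset.sum_sub_distrib, ← h2]
        simpa using h3

theorem quad_congr {r : ℕ} (G L : Matrix (Fin r) (Fin r) ℝ) (x : Fin r → ℝ) :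
    (G *ᵥ x) ⬝ᵥ (L *ᵥ (G *ᵥ x)) = x ⬝ᵥ ((Gᵀ * L * G) *ᵥ x) := by
  rw [← Matrix.mulVec_mulVec, ← Matrix.mulVec_mulVec, Matrix.dotProduct_mulVec x,
    Matrix.vecMul_transpose]

theorem col_eq {r : ℕ} (G : Matrix (Fin r) (Fin r) ℝ) (j : Fin r) :
    (fun i => G i j) = G *ᵥ Pi.single j 1 := by
  rw [Matrix.mulVec_single_one]; rfl

/-- Corollary 1 of the paper — with `‖k_i‖₂ < 1` (no nonnegativity),
`L* = (G Gᵀ)⁻¹` is optimal for `Q(S)` and the active points are exactly `{±g_j}`. -/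
theorem stmt3 (r ℓ : ℕ) (G : Matrix (Fin r) (Fin r) ℝ) (hG : G.rank = r)
    (K : Matrix (Fin r) (Fin ℓ) ℝ)
    (hK : ∀ i : Fin ℓ, euclNorm (fun a => K a i) < 1)
    (B : Matrix (Fin r) (Fin ℓ) ℝ) (hB : B = G * K)
    (S : Set (Fin r → ℝ))
    (hS : S = {x | (∃ j : Fin r, x = (fun i => G i j) ∨ x = -(fun i => G i j)) ∨
                   (∃ i : Fin ℓ, x = (fun a => B a i) ∨ x = -(fun a => B a i))})
    (Lstar : Matrix (Fin r) (Fin r) ℝ) (hLstar : Lstar = (G * Gᵀ)⁻¹) :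
    Lstar.PosDef ∧
    (∀ p ∈ S, p ⬝ᵥ (Lstar *ᵥ p) ≤ 1) ∧
    (∀ L : Matrix (Fin r) (Fin r) ℝ, L.PosDef →
      (∀ p ∈ S, p ⬝ᵥ (L *ᵥ p) ≤ 1) → L.det ≤ Lstar.det) ∧
    (∀ i : Fin ℓ, (fun a => B a i) ⬝ᵥ (Lstar *ᵥ fun a => B a i) < 1) ∧
    ({p ∈ S | p ⬝ᵥ (Lstar *ᵥ p) = 1} =
      {x | ∃ j : Fin r, x = (fun i => G i j) ∨ x = -(fun i => G i j)}) := by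
  have hu : IsUnit G := by
    rw [← Matrix.isUnit_transpose, ← Matrix.linearIndependent_rows_iff_isUnit]
    rw [linearIndependent_iff_card_eq_finrank_span, Fintype.card_fin]
    rw [Set.finrank, ← Matrix.rank_eq_finrank_span_row, Matrix.rank_transpose, hG]
  have hdet : IsUnit G.det := (Matrix.isUnit_iff_isUnit_det G).1 hu
  have hdet0 : G.det ≠ 0 := hdet.ne_zero
  have hdT : IsUnit Gᵀ.det := by rwa [Matrix.det_transpose]
  have hI : Gᵀ * Lstar * G = 1 := by
    rw [hLstar, Matrix.mul_inv_rev, Matrix.mul_nonsing_inv_cancel_left _ _ hdT,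
      Matrix.nonsing_inv_mul _ hdet]
  have hq : ∀ x : Fin r → ℝ, (G *ᵥ x) ⬝ᵥ (Lstar *ᵥ (G *ᵥ x)) = x ⬝ᵥ x := by
    intro x
    rw [quad_congr, hI, Matrix.one_mulVec]
  have hneg : ∀ p : Fin r → ℝ, (-p) ⬝ᵥ (Lstar *ᵥ (-p)) = p ⬝ᵥ (Lstar *ᵥ p) := by
    intro p
    simp [Matrix.mulVec_neg]
  have hg : ∀ j, (fun i => G i j) ⬝ᵥ (Lstar *ᵥ fun i => G i j) = 1 := by
    intro j
    rw [col_eq, hq]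
    simp
  have hb : ∀ i : Fin ℓ, (fun a => B a i) ⬝ᵥ (Lstar *ᵥ fun a => B a i) < 1 := by
    intro i
    have h : (fun a => B a i) = G *ᵥ (fun a => K a i) := by
      subst hB
      rfl
    rw [h, hq]
    have := hK i
    unfold euclNorm at this
    rw [Real.sqrt_lt' one_pos] at this
    simpa [dotProduct, pow_two] using this
  have hPD : Lstar.PosDef := by
    rw [hLstar]
    apply Matrix.PosDef.inv
    have := Matrix.PosDef.mul_conjTranspose_self G (Matrix.vecMul_injective_of_isUnit hu)
    simpa using this
  refine ⟨hPD, ?_, ?_, hb, ?_⟩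
  · intro p hp
    rw [hS] at hp
    rcases hp with ⟨j, rfl | rfl⟩ | ⟨j, rfl | rfl⟩
    · exact (hg j).le
    · rw [hneg]; exact (hg j).le
    · exact (hb j).le
    · rw [hneg]; exact (hb j).le
  · intro L hL hf
    have hM : (Gᵀ * L * G).PosDef := by
      have := hL.conjTranspose_mul_mul_same (B := G) (Matrix.mulVec_injective_of_isUnit hu)
      simpa using this
    have h1 : (Gᵀ * L * G).det ≤ 1 := by
      apply det_le_one_of_diag _ hM
      intro j
      have h := hf (fun i => G i j) (by rw [hS]; exact Or.inl ⟨j, Or.inl rfl⟩)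
      rw [col_eq, quad_congr] at h
      simpa using h
    rw [← Matrix.det_one (n := Fin r) (R := ℝ), ← hI] at h1
    simp only [Matrix.det_mul, Matrix.det_transpose] at h1
    have hp : 0 < G.det * G.det := mul_self_pos.2 hdet0
    refine le_of_mul_le_mul_left ?_ hp
    linarith
  · ext p
    simp only [Set.mem_ofPred_eq]
    constructor
    · rintro ⟨hp, h1⟩
      rw [hS] at hp
      rcases hp with h | ⟨j, rfl | rfl⟩
      · exact h
      · exact absurd h1 (hb j).ne
      · rw [hneg] at h1
        exact absurd h1 (hb j).ne
    · intro h
      refine ⟨by rw [hS]; exact Or.inl h, ?_⟩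
      rcases h with ⟨j, rfl | rfl⟩
      · exact hg j
      · rw [hneg]; exact hg j
end

section
/- Let A = (F, FK)Π ∈ ℝ^{d×m}, where F ∈ ℝ^{d×r} has rank r, K ∈ ℝ^{r×ℓ} (ℓ = m − r) is nonnegative with columns k_1, …, k_ℓ of unit 1-norm, and Π is an m×m permutation matrix. Let N ∈ ℝ^{d×m}, Ã = A + N, let Ã^r be a best rank-r approximation of Ã in the spectral norm, set N̄ = N − (Ã − Ã^r), write N̄Π⁻¹ = (N̄⁽¹⁾, N̄⁽²⁾) with N̄⁽¹⁾ ∈ ℝ^{d×r}, and set F̂ = F + N̄⁽¹⁾. Let σ = σ_min(F) and μ = max_i ‖k_i‖_2. If ‖N‖_2 < σ(1 − μ)/4, then σ_min(F̂) > σ(1 + μ)/2 > 0; in particular, F̂ has rank r. -/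
open Matrix

lemma euclNorm_eq {n : ℕ} (v : Fin n → ℝ) : euclNorm v = ‖WithLp.toLp 2 v‖ := by
  rw [EuclideanSpace.norm_eq]
  simp [euclNorm]

lemma euclNorm_nonneg {n : ℕ} (v : Fin n → ℝ) : 0 ≤ euclNorm v := Real.sqrt_nonneg _

lemma specNorm_nonneg {d m : ℕ} (M : Matrix (Fin d) (Fin m) ℝ) : 0 ≤ specNorm M :=
  norm_nonneg _

lemma euclNorm_mulVec_le {d m : ℕ} (M : Matrix (Fin d) (Fin m) ℝ) (x : Fin m → ℝ) :
    euclNorm (M *ᵥ x) ≤ specNorm M * euclNorm x := by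
  rw [euclNorm_eq, euclNorm_eq]
  exact (LinearMap.toContinuousLinearMap (Matrix.toEuclideanLin M)).le_opNorm (WithLp.toLp 2 x)

lemma specNorm_sub_le {d m : ℕ} (M P : Matrix (Fin d) (Fin m) ℝ) :
    specNorm (M - P) ≤ specNorm M + specNorm P := by
  unfold specNorm
  rw [map_sub, map_sub]
  exact norm_sub_le _ _

lemma euclNorm_add_ge {n : ℕ} (v w : Fin n → ℝ) :
    euclNorm v - euclNorm w ≤ euclNorm (v + w) := by
  rw [euclNorm_eq, euclNorm_eq, euclNorm_eq, WithLp.toLp_add]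
  have := norm_sub_le (WithLp.toLp 2 v + WithLp.toLp 2 w) (WithLp.toLp 2 w)
  rw [add_sub_cancel_right] at this
  linarith

lemma sigmaMin_le {d r : ℕ} (M : Matrix (Fin d) (Fin r) ℝ) (x : Fin r → ℝ)
    (hx : euclNorm x = 1) : sigmaMin M ≤ euclNorm (M *ᵥ x) := by
  apply csInf_le
  · refine ⟨0, ?_⟩
    rintro _ ⟨y, _, rfl⟩
    exact euclNorm_nonneg _
  · exact ⟨x, hx, rfl⟩

lemma sigmaMin_nonneg {d r : ℕ} (M : Matrix (Fin d) (Fin r) ℝ) : 0 ≤ sigmaMin M := by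
  apply Real.sInf_nonneg
  rintro _ ⟨y, _, rfl⟩
  exact euclNorm_nonneg _

lemma rank_of_sigmaMin_pos {d r : ℕ} (M : Matrix (Fin d) (Fin r) ℝ) (h : 0 < sigmaMin M) :
    M.rank = r := by
  have inj : Function.Injective M.mulVecLin := by
    rw [injective_iff_map_eq_zero]
    intro x hx
    by_contra hne
    have hne' : WithLp.toLp 2 x ≠ 0 := by simpa using hne
    have hpos : 0 < ‖WithLp.toLp 2 x‖ := norm_pos_iff.mpr hne'
    have h1 : euclNorm (‖WithLp.toLp 2 x‖⁻¹ • x) = 1 := by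
      rw [euclNorm_eq, WithLp.toLp_smul, norm_smul, norm_inv, norm_norm]
      exact inv_mul_cancel₀ hpos.ne'
    have h2 := sigmaMin_le M _ h1
    have hx' : M *ᵥ x = 0 := hx
    rw [Matrix.mulVec_smul, hx', smul_zero] at h2
    have : euclNorm (0 : Fin d → ℝ) = 0 := by simp [euclNorm]
    linarith
  rw [Matrix.rank, LinearMap.finrank_range_of_inj inj]
  simp

/-- Lemma 3-a of the paper — if `‖N‖₂ < σ(1 − μ)/4` then
`σ_min(F̂) > σ(1 + μ)/2 > 0`, so `F̂` has rank `r`. -/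
theorem stmt8 (d m r ℓ : ℕ)
    (F : Matrix (Fin d) (Fin r) ℝ) (hF : F.rank = r)
    (K : Matrix (Fin r) (Fin ℓ) ℝ) (hKpos : ∀ a i, 0 ≤ K a i)
    (hK1 : ∀ i : Fin ℓ, oneNorm (fun a => K a i) = 1)
    (π : Fin m ≃ (Fin r ⊕ Fin ℓ))
    (A : Matrix (Fin d) (Fin m) ℝ)
    (hA : ∀ i j, A i j = Sum.elim (fun a => F i a) (fun b => (F * K) i b) (π j))
    (N : Matrix (Fin d) (Fin m) ℝ)
    (Ar : Matrix (Fin d) (Fin m) ℝ) (hAr_rank : Ar.rank ≤ r)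
    (hAr_best : ∀ B : Matrix (Fin d) (Fin m) ℝ, B.rank ≤ r →
      specNorm (A + N - Ar) ≤ specNorm (A + N - B))
    (Nbar : Matrix (Fin d) (Fin m) ℝ) (hNbar : Nbar = N - (A + N - Ar))
    (N1 : Matrix (Fin d) (Fin r) ℝ) (hN1 : ∀ i a, N1 i a = Nbar i (π.symm (Sum.inl a)))
    (Fhat : Matrix (Fin d) (Fin r) ℝ) (hFhat : Fhat = F + N1)
    (σ μ : ℝ) (hσ : σ = sigmaMin F) (hμ : μ = ⨆ i : Fin ℓ, euclNorm (fun a => K a i))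
    (hN : specNorm N < σ * (1 - μ) / 4) :
    sigmaMin Fhat > σ * (1 + μ) / 2 ∧ σ * (1 + μ) / 2 > 0 ∧ Fhat.rank = r := by
  have hN0 := specNorm_nonneg N
  have hσ0 : 0 ≤ σ := hσ ▸ sigmaMin_nonneg F
  have hμ0 : 0 ≤ μ := by
    rw [hμ]
    exact Real.iSup_nonneg fun i => euclNorm_nonneg _
  have hprod : 0 < σ * (1 - μ) := by linarith
  have hσpos : 0 < σ := by
    rcases hσ0.eq_or_lt with h | h
    · rw [← h] at hprod
      simp at hprod
    · exact h
  have hArank : A.rank ≤ r := by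
    have hfac : A = F * (Matrix.of fun a j =>
        Sum.elim (fun b => (1 : Matrix (Fin r) (Fin r) ℝ) a b) (fun b => K a b) (π j)) := by
      ext i j
      rw [hA, Matrix.mul_apply]
      rcases hj : π j with b | b
      · simp [Matrix.one_apply, hj]
      · simp [Matrix.mul_apply, hj]
    rw [hfac]
    exact (Matrix.rank_mul_le_left _ _).trans hF.le
  have hbest : specNorm (A + N - Ar) ≤ specNorm N := by
    have := hAr_best A hArank
    rwa [add_sub_cancel_left] at this
  have hNb : specNorm Nbar ≤ 2 * specNorm N := by
    rw [hNbar]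
    have := specNorm_sub_le N (A + N - Ar)
    linarith
  have hN1x : ∀ x : Fin r → ℝ, euclNorm (N1 *ᵥ x) ≤ specNorm Nbar * euclNorm x := by
    intro x
    have h1 : N1 *ᵥ x = Nbar *ᵥ (fun j => Sum.elim x (fun _ => 0) (π j)) := by
      ext i
      simp only [Matrix.mulVec, dotProduct]
      rw [← π.symm.sum_comp, Fintype.sum_sum_type]
      simp [hN1]
    have h2 : euclNorm x = euclNorm (fun j => Sum.elim x (fun _ => 0) (π j)) := by
      unfold euclNorm
      rw [← π.symm.sum_comp (fun j => (Sum.elim x (fun _ => 0) (π j)) ^ 2),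
        Fintype.sum_sum_type]
      simp
    rw [h1, h2]
    exact euclNorm_mulVec_le _ _
  have hne : {x : Fin r → ℝ | euclNorm x = 1}.Nonempty := by
    by_contra h
    rw [Set.not_nonempty_iff_eq_empty] at h
    rw [hσ, sigmaMin, h] at hσpos
    simp at hσpos
  have hmain : σ - 2 * specNorm N ≤ sigmaMin Fhat := by
    apply le_csInf (hne.image _)
    rintro _ ⟨x, hx, rfl⟩
    have hx' : euclNorm x = 1 := hx
    have h1 := sigmaMin_le F x hx'
    have h2 := hN1x x
    have h3 := euclNorm_add_ge (F *ᵥ x) (N1 *ᵥ x)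
    rw [← Matrix.add_mulVec, ← hFhat] at h3
    rw [hx'] at h2
    simp only
    linarith
  have hpos : σ * (1 + μ) / 2 > 0 := by positivity
  have hgt : sigmaMin Fhat > σ * (1 + μ) / 2 := by
    nlinarith
  exact ⟨hgt, hpos, rank_of_sigmaMin_pos _ (hpos.trans hgt)⟩
end
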